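/- Let 𝒢 = (G,p,θ,τ) be a well-positioned Γ-symmetric bar-joint framework in X. Then the complex-linear extension df_G(p) : (X_ℂ)^V → ℂ^E maps X_χ into Y_χ for every character χ ∈ Γ̂; consequently, with respect to the direct sum decompositions (X_ℂ)^V = ⊕_{χ∈Γ̂} X_χ and ℂ^E = ⊕_{χ∈Γ̂} Y_χ, the map df_G(p) is the direct sum ⊕_{χ∈Γ̂} R_χ(𝒢) of the restricted linear maps R_χ(𝒢) : X_χ → Y_χ. -/

import Mathlib

/-!
Statement 2 (Proposition 2.4 / prop:block): the complexified differential `df_G(p)`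
maps each character space `X_χ` into `Y_χ`, i.e. it decomposes as the direct sum of
the restricted maps `R_χ(𝒢) : X_χ → Y_χ`.
-/

open scoped TensorProduct

namespace Stmt2

variable {V : Type} [Fintype V] [DecidableEq V]
variable {X : Type} [NormedAddCommGroup X] [NormedSpace ℝ X]
variable {Γ : Type} [CommGroup Γ] [Fintype Γ]

/-- The edge-length (rigidity) map `f_G : X^V → ℝ^E`. -/
noncomputable def fG (G : SimpleGraph V) [Fintype G.edgeSet] (x : V → X) (e : G.edgeSet) : ℝ :=
  Sym2.lift ⟨fun v w => ‖x v - x w‖, fun v w => by simp only []; rw [norm_sub_rev]⟩ e.1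

/-- A framework is well-positioned if `f_G` is differentiable at `p`. -/
noncomputable def WellPositioned (G : SimpleGraph V) [Fintype G.edgeSet] (p : V → X) : Prop :=
  DifferentiableAt ℝ (fG G) p

/-- The (real) differential `df_G(p)`. -/
noncomputable def dfR (G : SimpleGraph V) [Fintype G.edgeSet] (p : V → X) :
    (V → X) →L[ℝ] (G.edgeSet → ℝ) :=
  fderiv ℝ (fG G) p

/-- The functional `φ_{v,w}` (for the edge `e` and endpoint `v`) obtained from the
differential. -/
noncomputable def phiEdge (G : SimpleGraph V) [Fintype G.edgeSet] (p : V → X)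
    (e : G.edgeSet) (v : V) : X →ₗ[ℝ] ℝ :=
  (LinearMap.proj (R := ℝ) (φ := fun _ : G.edgeSet => ℝ) e).comp
    ((dfR G p).toLinearMap.comp (LinearMap.single ℝ (fun _ : V => X) v))

/-- Complexification of a real linear functional to `X_ℂ →ₗ[ℂ] ℂ`. -/
noncomputable def cplxFunctional (f : X →ₗ[ℝ] ℝ) : (ℂ ⊗[ℝ] X) →ₗ[ℂ] ℂ :=
  LinearMap.liftBaseChange ℂ ((Complex.ofRealCLM.toLinearMap).comp f)

/-- The complex-linear extension of `df_G(p)` to `(X_ℂ)^V → ℂ^E`. -/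
noncomputable def dfC (G : SimpleGraph V) [Fintype G.edgeSet] (p : V → X) :
    (V → ℂ ⊗[ℝ] X) →ₗ[ℂ] (G.edgeSet → ℂ) :=
  LinearMap.pi fun e : G.edgeSet =>
    ∑ v : V, (cplxFunctional (phiEdge G p e v)).comp
      (LinearMap.proj (R := ℂ) (φ := fun _ : V => ℂ ⊗[ℝ] X) v)

/-- The induced action of a graph automorphism on the edge set. -/
def edgeAct (G : SimpleGraph V) (θ : Γ →* Equiv.Perm V)
    (hadj : ∀ (γ : Γ) (u v : V), G.Adj u v ↔ G.Adj (θ γ u) (θ γ v))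
    (γ : Γ) (e : G.edgeSet) : G.edgeSet :=
  ⟨Sym2.map (θ γ) e.1, by
    obtain ⟨e, he⟩ := e
    induction e using Sym2.ind with
    | _ u v => simpa using (hadj γ u v).1 (by simpa using he)⟩

/-- Complexification of the isometry `τ γ`. -/
noncomputable def tauC (τ : Γ →* (X ≃ₗᵢ[ℝ] X)) (γ : Γ) :
    (ℂ ⊗[ℝ] X) →ₗ[ℂ] (ℂ ⊗[ℝ] X) :=
  LinearMap.baseChange ℂ ((τ γ).toLinearEquiv.toLinearMap)

/-- The character subspace `X_χ ⊆ (X_ℂ)^V`. -/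
noncomputable def Xchi (θ : Γ →* Equiv.Perm V) (τ : Γ →* (X ≃ₗᵢ[ℝ] X)) (χ : Γ →* ℂ) :
    Submodule ℂ (V → ℂ ⊗[ℝ] X) :=
  ⨅ (γ : Γ), ⨅ (v : V),
    LinearMap.ker
      ((LinearMap.proj (R := ℂ) (φ := fun _ : V => ℂ ⊗[ℝ] X) (θ γ v)) -
        χ γ • ((tauC τ γ).comp (LinearMap.proj (R := ℂ) (φ := fun _ : V => ℂ ⊗[ℝ] X) v)))

/-- The character subspace `Y_χ ⊆ ℂ^E`. -/
noncomputable def Ychi (G : SimpleGraph V) (θ : Γ →* Equiv.Perm V)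
    (hadj : ∀ (γ : Γ) (u v : V), G.Adj u v ↔ G.Adj (θ γ u) (θ γ v)) (χ : Γ →* ℂ) :
    Submodule ℂ (G.edgeSet → ℂ) :=
  ⨅ (γ : Γ), ⨅ (e : G.edgeSet),
    LinearMap.ker
      ((LinearMap.proj (R := ℂ) (φ := fun _ : G.edgeSet => ℂ) (edgeAct G θ hadj γ e)) -
        χ γ • (LinearMap.proj (R := ℂ) (φ := fun _ : G.edgeSet => ℂ) e))

/-!
For a linear isometry `T` and a graph homomorphism `φ`, the edge lengths satisfy
`f (T ∘ x ∘ φ) e = f x (φ e)` for every placement `x`. Differentiating at a placement `p` with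
`T ∘ p ∘ φ = p` shows that `df(p)` intertwines the pullback of velocities with the pullback along
the edge map, and the complex-linear extension inherits this because it is determined by its
values on real velocities. An intertwining map sends joint eigenspaces to joint eigenspaces with
the same eigenvalues; `X_χ` and `Y_χ` are the joint eigenspaces for the eigenvalues `χ γ` of the
pullbacks with `φ = θ γ` and `T = (τ γ)⁻¹`.
-/

section Pullback

variable {R M N ι κ : Type*} [Semiring R] [AddCommMonoid M] [AddCommMonoid N]
  [Module R M] [Module R N]

/-- The pullback of vector-valued functions along `f : ι → κ`, with values transported by the
linear map `T`. It serves as the action on placements and velocities: with `f = θ γ` and `T` the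
complexification of `(τ γ)⁻¹`, the condition `x (γ v) = χ γ • τ γ (x v)` says that `x` is an
eigenvector of `pullback T f` for the eigenvalue `χ γ`. -/
def pullback (T : M →ₗ[R] N) (f : ι → κ) : (κ → M) →ₗ[R] (ι → N) :=
  T.compLeft ι ∘ₗ LinearMap.funLeft R M f

lemma pullback_apply (T : M →ₗ[R] N) (f : ι → κ) (u : κ → M) (i : ι) :
    pullback T f u i = T (u (f i)) := rfl

end Pullback

lemma linearMap_pi_baseChange_ext {R A M N ι : Type*} [CommSemiring R] [Semiring A] [Algebra R A]
    [AddCommMonoid M] [Module R M] [AddCommMonoid N] [Module A N] [Finite ι]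
    {f g : (ι → A ⊗[R] M) →ₗ[A] N}
    (h : ∀ u : ι → M, f (fun i => 1 ⊗ₜ[R] u i) = g (fun i => 1 ⊗ₜ[R] u i)) : f = g := by
  classical
  -- Extensionality for maps out of `A ⊗[R] M` needs the codomain to be an `R`-module.
  let _ : Module R N := Module.compHom N (algebraMap R A)
  have : IsScalarTower R A N := IsScalarTower.of_algebraMap_smul fun _ _ => rfl
  ext i m
  have hsingle : Pi.single i (1 ⊗ₜ[R] m : A ⊗[R] M) = fun j => 1 ⊗ₜ[R] (Pi.single i m : ι → M) j :=
    Pi.single_op (fun _ => (1 ⊗ₜ[R] · : M → A ⊗[R] M)) (fun _ => TensorProduct.tmul_zero M 1) i m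
  simpa [hsingle] using h (Pi.single i m)

lemma map_iInf_eigenspace_le {R M N : Type*} {ι : Sort*} [CommRing R] [AddCommGroup M]
    [AddCommGroup N] [Module R M] [Module R N] {f : M →ₗ[R] N} {S : ι → Module.End R M}
    {T : ι → Module.End R N} (h : ∀ i, f ∘ₗ S i = T i ∘ₗ f) (c : ι → R) :
    (⨅ i, (S i).eigenspace (c i)).map f ≤ ⨅ i, (T i).eigenspace (c i) := by
  rintro _ ⟨x, hx, rfl⟩
  simp only [SetLike.mem_coe, Submodule.mem_iInf, Module.End.mem_eigenspace_iff] at hx ⊢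
  intro i
  rw [← LinearMap.comp_apply, ← h i, LinearMap.comp_apply, hx i, map_smul]

section Differential

variable {V₁ V₂ X₁ X₂ : Type} [NormedAddCommGroup X₁] [NormedSpace ℝ X₁]
  [NormedAddCommGroup X₂] [NormedSpace ℝ X₂]
  {G₁ : SimpleGraph V₁} {G₂ : SimpleGraph V₂} [Fintype G₁.edgeSet] [Fintype G₂.edgeSet]

lemma fG_comp (T : X₂ →ₗᵢ[ℝ] X₁) (φ : G₁ →g G₂) (x : V₂ → X₂) (e : G₁.edgeSet) :
    fG G₁ (T ∘ x ∘ φ) e = fG G₂ x (φ.mapEdgeSet e) := by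
  obtain ⟨e, he⟩ := e
  induction e using Sym2.ind with
  | _ v w => simp [fG, ← map_sub]

lemma dfR_comp [Finite V₁] [Finite V₂] {p : V₂ → X₂} (T : X₂ →ₗᵢ[ℝ] X₁) (φ : G₁ →g G₂)
    (hp₁ : WellPositioned G₁ (T ∘ p ∘ φ)) (hp₂ : WellPositioned G₂ p) (u : V₂ → X₂)
    (e : G₁.edgeSet) : dfR G₁ (T ∘ p ∘ φ) (T ∘ u ∘ φ) e = dfR G₂ p u (φ.mapEdgeSet e) := by
  have := Fintype.ofFinite V₁
  have := Fintype.ofFinite V₂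
  let A : (V₂ → X₂) →L[ℝ] (V₁ → X₁) :=
    .pi fun v => T.toContinuousLinearMap ∘L .proj (φ v)
  have hcomp : HasFDerivAt (fun x => fG G₁ (A x) e) (.proj e ∘L dfR G₁ (A p) ∘L A) p :=
    hasFDerivAt_pi'.1 ((DifferentiableAt.hasFDerivAt hp₁).comp p A.hasFDerivAt) e
  have hmap : HasFDerivAt (fun x => fG G₁ (A x) e) (.proj (φ.mapEdgeSet e) ∘L dfR G₂ p) p :=
    (hasFDerivAt_pi'.1 (DifferentiableAt.hasFDerivAt hp₂) _).congr_of_eventuallyEq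
      (.of_forall fun x => fG_comp T φ x e)
  exact DFunLike.congr_fun (hcomp.unique hmap) u

lemma dfC_one_tmul [Fintype V₁] [DecidableEq V₁] (p u : V₁ → X₁) (e : G₁.edgeSet) :
    dfC G₁ p (fun v => 1 ⊗ₜ[ℝ] u v) e = dfR G₁ p u e := by
  conv_rhs => rw [← Finset.univ_sum_single u]
  simp [dfC, cplxFunctional, phiEdge]

lemma dfC_comp_pullback [Fintype V₁] [Fintype V₂] [DecidableEq V₁] [DecidableEq V₂] {p : V₂ → X₂}
    (T : X₂ →ₗᵢ[ℝ] X₁) (φ : G₁ →g G₂) (hp₁ : WellPositioned G₁ (T ∘ p ∘ φ))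
    (hp₂ : WellPositioned G₂ p) :
    dfC G₁ (T ∘ p ∘ φ) ∘ₗ pullback (T.toLinearMap.baseChange ℂ) φ =
      LinearMap.funLeft ℂ ℂ φ.mapEdgeSet ∘ₗ dfC G₂ p := by
  refine linearMap_pi_baseChange_ext fun u => funext fun e => ?_
  calc dfC G₁ (T ∘ p ∘ φ) (pullback (T.toLinearMap.baseChange ℂ) φ fun w => 1 ⊗ₜ u w) e
      = dfC G₁ (T ∘ p ∘ φ) (fun v => 1 ⊗ₜ (T ∘ u ∘ φ) v) e := rfl
    _ = dfR G₂ p u (φ.mapEdgeSet e) := by rw [dfC_one_tmul, dfR_comp T φ hp₁ hp₂]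
    _ = dfC G₂ p (fun w => 1 ⊗ₜ u w) (φ.mapEdgeSet e) := (dfC_one_tmul p u _).symm

end Differential

theorem block_decomposition_general {ι : Sort*} {G : SimpleGraph V} [Fintype G.edgeSet]
    {p : V → X} (hwp : WellPositioned G p) (φ : ι → G →g G) (T : ι → X →ₗᵢ[ℝ] X)
    (hsymm : ∀ i, T i ∘ p ∘ φ i = p) (χ : ι → ℂ) :
    (⨅ i, Module.End.eigenspace (pullback ((T i).toLinearMap.baseChange ℂ) (φ i)) (χ i)).map
        (dfC G p) ≤
      ⨅ i, Module.End.eigenspace (LinearMap.funLeft ℂ ℂ (φ i).mapEdgeSet) (χ i) := by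
  refine map_iInf_eigenspace_le (fun i => ?_) χ
  simpa only [hsymm i] using dfC_comp_pullback (T i) (φ i) ((hsymm i).symm ▸ hwp) hwp

section Characters

variable {V X Γ : Type} [NormedAddCommGroup X] [NormedSpace ℝ X] [CommGroup Γ]

lemma baseChange_symm_eq_smul_iff (τ : Γ →* (X ≃ₗᵢ[ℝ] X)) (γ : Γ) (c : ℂ) (y z : ℂ ⊗[ℝ] X) :
    (τ γ).symm.toLinearIsometry.toLinearMap.baseChange ℂ y = c • z ↔ y = c • tauC τ γ z := by
  rw [← map_smul]
  exact ((τ γ).toLinearEquiv.baseChange ℝ ℂ X X).symm_apply_eq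

lemma Xchi_eq_iInf_eigenspace (θ : Γ →* Equiv.Perm V) (τ : Γ →* (X ≃ₗᵢ[ℝ] X)) (χ : Γ →* ℂ) :
    Xchi θ τ χ = ⨅ γ, Module.End.eigenspace
      (pullback ((τ γ).symm.toLinearIsometry.toLinearMap.baseChange ℂ) (θ γ)) (χ γ) := by
  ext x
  simp only [Xchi, Submodule.mem_iInf, LinearMap.mem_ker, LinearMap.sub_apply, sub_eq_zero,
    Module.End.mem_eigenspace_iff, funext_iff, pullback_apply, Pi.smul_apply,
    baseChange_symm_eq_smul_iff]
  rfl

/-- The automorphism of a `Γ`-symmetric graph induced by `γ`, as a graph homomorphism: its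
`mapEdgeSet` is the action of `γ` on the edges. -/
def symmetryHom (G : SimpleGraph V) (θ : Γ →* Equiv.Perm V)
    (hadj : ∀ (γ : Γ) (u v : V), G.Adj u v ↔ G.Adj (θ γ u) (θ γ v)) (γ : Γ) : G →g G :=
  ⟨θ γ, (hadj γ _ _).1⟩

lemma Ychi_eq_iInf_eigenspace (G : SimpleGraph V) (θ : Γ →* Equiv.Perm V)
    (hadj : ∀ (γ : Γ) (u v : V), G.Adj u v ↔ G.Adj (θ γ u) (θ γ v)) (χ : Γ →* ℂ) :
    Ychi G θ hadj χ = ⨅ γ, Module.End.eigenspace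
      (LinearMap.funLeft ℂ ℂ (symmetryHom G θ hadj γ).mapEdgeSet) (χ γ) := by
  ext y
  simp only [Ychi, Submodule.mem_iInf, LinearMap.mem_ker, LinearMap.sub_apply, sub_eq_zero,
    Module.End.mem_eigenspace_iff, funext_iff]
  rfl

end Characters

theorem block_decomposition
    (hd : 2 ≤ Module.finrank ℝ X) [FiniteDimensional ℝ X]
    (G : SimpleGraph V) [Fintype G.edgeSet] (p : V → X)
    (hpinj : Function.Injective p)
    (hwp : WellPositioned G p)
    (θ : Γ →* Equiv.Perm V)
    (hadj : ∀ (γ : Γ) (u v : V), G.Adj u v ↔ G.Adj (θ γ u) (θ γ v))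
    (hfree : ∀ γ : Γ, γ ≠ 1 → ∀ v : V, θ γ v ≠ v)
    (τ : Γ →* (X ≃ₗᵢ[ℝ] X))
    (hsymm : ∀ (γ : Γ) (v : V), τ γ (p v) = p (θ γ v)) :
    ∀ χ : Γ →* ℂ, Submodule.map (dfC G p) (Xchi θ τ χ) ≤ Ychi G θ hadj χ := by
  intro χ
  rw [Xchi_eq_iInf_eigenspace, Ychi_eq_iInf_eigenspace]
  exact block_decomposition_general hwp (symmetryHom G θ hadj)
    (fun γ => (τ γ).symm.toLinearIsometry)
    (fun γ => funext fun v => (τ γ).symm_apply_eq.2 (hsymm γ v).symm) χ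

end Stmt2
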